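/- arXiv:2104.11898 — 3 statements merged into one kernel-verified Lean document; each statement's English description precedes it below -/
import Mathlib

section
/- Let d ≥ 3 and let η be a probability distribution on ℤ^d whose random walk is transient. Then for every finite set A ⊆ ℤ^d and every positive integer k, the η-capacity satisfies cap_η(A) ≥ (#A)/(k+1) − ( ∑_{x,y∈A} G_η(x,y) ) / (k(k+1)). -/
open MeasureTheory ProbabilityTheory
open scoped ENNReal

/-!
Fix `x ∈ A`. By Markov's inequality the walk from `x` visits `A` more than `k` times with
probability at most `(∑ y ∈ A, G(x, y)) / (k + 1)`. Otherwise there is a last visit to `A`, at some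
time `m` and some `y ∈ A`, with at most `k` visits up to then; by the Markov property the
probability of this is the product of that of the initial piece, a path from `x` to `y` in time `m`
with at most `k` visits, and the escape probability from `y`.

Summed over `x ∈ A` and `m`, the probabilities of the initial pieces ending at `y` add up to at most
`k`: reversed in time, such a piece is a path of the walk from `y` with negated increments which
makes one of its first `k` visits to `A` at time `m`. Summing over `x ∈ A` therefore gives
`#A ≤ (∑ x ∈ A, ∑ y ∈ A, G(x, y)) / (k + 1) + k * cap(A)`.
-/

open Set Measure

section Counting

theorem encard_sep_encard_inter_Iic_le {α : Type*} [LinearOrder α] (s : Set α) (k : ℕ) :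
    {m ∈ s | (s ∩ Iic m).encard ≤ k}.encard ≤ k := by
  by_contra! hlt
  obtain ⟨t, ht, htcard⟩ := exists_subset_encard_eq (Order.add_one_le_of_lt hlt)
  have htfin : t.Finite := finite_of_encard_eq_coe (k := k + 1) (by exact_mod_cast htcard)
  have htne : t.Nonempty := by
    rw [← encard_pos, htcard]
    exact pos_of_ne_zero (by simp)
  obtain ⟨m, hmt, hmax⟩ := exists_max_image t id htfin htne
  have hsub : t ⊆ s ∩ Iic m := fun i hi ↦ ⟨(ht hi).1, hmax i hi⟩
  have hle : (k : ℕ∞) + 1 ≤ k := htcard ▸ (encard_mono hsub).trans (ht hmt).2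
  exact absurd hle (by exact_mod_cast Nat.not_succ_le_self k)

theorem encard_inter_Iic_eq_of_forall_mem_iff {s t : Set ℕ} {m : ℕ}
    (h : ∀ i ≤ m, i ∈ t ↔ m - i ∈ s) : (t ∩ Iic m).encard = (s ∩ Iic m).encard := by
  have himage : (m - ·) '' (s ∩ Iic m) = t ∩ Iic m := by
    ext i
    constructor
    · rintro ⟨j, ⟨hj, hjm : j ≤ m⟩, rfl⟩
      refine ⟨(h _ (Nat.sub_le m j)).2 ?_, Nat.sub_le m j⟩
      rwa [Nat.sub_sub_self hjm]
    · rintro ⟨hi, him : i ≤ m⟩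
      exact ⟨m - i, ⟨(h i him).1 hi, Nat.sub_le m i⟩, Nat.sub_sub_self him⟩
  have hinj : InjOn (m - ·) (s ∩ Iic m) := by
    rintro i ⟨-, hi : i ≤ m⟩ j ⟨-, hj : j ≤ m⟩ (hij : m - i = m - j)
    omega
  rw [← himage, hinj.encard_image]

variable {α ι : Type*} [MeasurableSpace α] [Countable ι]

theorem measurable_encard_setOf_mem {s : ι → Set α} (hs : ∀ i, MeasurableSet (s i)) :
    Measurable fun a ↦ {i | a ∈ s i}.encard :=
  measurable_encard.comp (measurable_set_iff.2 fun i ↦ (hs i).mem)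

theorem lintegral_encard_setOf_mem {μ : Measure α} {s : ι → Set α}
    (hs : ∀ i, MeasurableSet (s i)) :
    ∫⁻ a, ({i | a ∈ s i}.encard : ℝ≥0∞) ∂μ = ∑' i, μ (s i) := by
  have hencard (a : α) : ({i | a ∈ s i}.encard : ℝ≥0∞) = ∑' i, (s i).indicator 1 a := by
    rw [← ENNReal.tsum_set_one, tsum_subtype _ fun _ ↦ (1 : ℝ≥0∞)]
    rfl
  simp_rw [hencard, lintegral_tsum fun i ↦ (measurable_one.indicator (hs i)).aemeasurable,
    lintegral_indicator_one (hs _)]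

end Counting

section ProductMeasure

variable {E : Type*} [MeasurableSpace E]

theorem infinitePi_const_preimage_comp (η : Measure E) [IsProbabilityMeasure η] {ι κ : Type*}
    {f : κ → ι} (hf : f.Injective) {s : Set (κ → E)} (hs : MeasurableSet s) :
    infinitePi (fun _ : ι ↦ η) ((· ∘ f) ⁻¹' s) = infinitePi (fun _ : κ ↦ η) s := by
  rw [← map_infinitePi_infinitePi_of_inj (P := fun _ : ι ↦ η) hf,
    map_apply (by fun_prop) hs]
  rfl

theorem indepFun_domRestrict_infinitePi {ι : Type*} {X : ι → Type*} [∀ i, MeasurableSpace (X i)]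
    (μ : (i : ι) → Measure (X i)) [∀ i, IsProbabilityMeasure (μ i)] {s t : Set ι}
    (hst : Disjoint s t) :
    IndepFun (s.domRestrict (π := X)) (t.domRestrict (π := X)) (infinitePi μ) := by
  have hindep : iIndepFun (fun i (u : (i : ι) → X i) ↦ u i) (infinitePi μ) :=
    iIndepFun_infinitePi (X := fun _ e ↦ e) fun _ ↦ measurable_id
  have hle (r : Set ι) : MeasurableSpace.comap (r.domRestrict (π := X)) inferInstance ≤
      ⨆ i ∈ r, MeasurableSpace.comap (fun u : (i : ι) → X i ↦ u i) inferInstance := by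
    simp only [MeasurableSpace.pi, MeasurableSpace.comap_iSup, MeasurableSpace.comap_comp]
    exact iSup_le fun i ↦ le_iSup₂_of_le i.1 i.2 le_rfl
  exact indep_of_indep_of_le
    (indep_iSup_of_disjoint (fun i ↦ (measurable_pi_apply i).comap_le) hindep hst) (hle s) (hle t)

theorem infinitePi_const_inter_shift_preimage (η : Measure E) [IsProbabilityMeasure η] {m : ℕ}
    {s t : Set (ℕ → E)} (hs : MeasurableSet s) (hsm : DependsOn (· ∈ s) (Iio m))
    (ht : MeasurableSet t) :
    infinitePi (fun _ ↦ η) (s ∩ (· ∘ (m + ·)) ⁻¹' t) =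
      infinitePi (fun _ ↦ η) s * infinitePi (fun _ ↦ η) t := by
  classical
  obtain ⟨e⟩ : Nonempty E := η.nonempty_of_neZero
  let extend (v : Iio m → E) (i : ℕ) : E := if h : i ∈ Iio m then v ⟨i, h⟩ else e
  let shift (w : Ici m → E) (j : ℕ) : E := w ⟨m + j, Nat.le_add_right m j⟩
  have hextend : Measurable extend := by
    refine measurable_pi_iff.2 fun i ↦ ?_
    by_cases h : i ∈ Iio m <;> simp only [extend, h, dite_true, dite_false] <;> fun_prop
  have hs_eq : s = (Iio m).domRestrict ⁻¹' (extend ⁻¹' s) := by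
    ext u
    refine (hsm fun i hi ↦ ?_).to_iff
    simp only [extend, dif_pos hi, domRestrict_apply]
  have hshift : Measurable shift := by fun_prop
  have hdisjoint : Disjoint (Iio m) (Ici m) := Iio_disjoint_Ici le_rfl
  have hindep := (indepFun_domRestrict_infinitePi (fun _ ↦ η)
    hdisjoint).measure_inter_preimage_eq_mul _ _ (hextend hs) (hshift ht)
  rw [← hs_eq] at hindep
  rw [← infinitePi_const_preimage_comp η (add_right_injective m) ht]
  exact hindep

theorem measure_mem_eq_infinitePi {η : Measure E} {Ω : Type*} [MeasurableSpace Ω] {P : Measure Ω}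
    {ι : Type*} {ξ : ι → Ω → E} (hmeas : ∀ i, Measurable (ξ i)) (hindep : iIndepFun ξ P)
    (hlaw : ∀ i, Measure.map (ξ i) P = η) {s : Set (ι → E)} (hs : MeasurableSet s) :
    P {ω | (ξ · ω) ∈ s} = infinitePi (fun _ ↦ η) s := by
  have hmap : P.map (fun ω ↦ (ξ · ω)) = infinitePi fun _ ↦ η := by
    simpa only [hlaw] using hindep.map_fun_eq_infinitePi_map hmeas
  rw [← hmap, map_apply (by fun_prop) hs]
  rfl

end ProductMeasure

section Walk

variable {E : Type*} [AddCommMonoid E]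

/-- The walk started at `x` with increments `u`. -/
def walk (x : E) (u : ℕ → E) (n : ℕ) : E := x + ∑ j ∈ Finset.range n, u j

/-- The increment sequences for which the walk started at `x` never returns to `A`, that is, the
event `τ_A⁺ = ∞`. -/
def escapePaths (A : Set E) (x : E) : Set (ℕ → E) := {u | ∀ n, 1 ≤ n → walk x u n ∉ A}

/-- The increment sequences for which the walk started at `x` is at `y` at time `m` and visits `A`
at most `k` times up to time `m`, the times `0` and `m` included. -/
def boundedVisitPaths (A : Set E) (k : ℕ) (x y : E) (m : ℕ) : Set (ℕ → E) :=
  {u | walk x u m = y ∧ (walk x u ⁻¹' A ∩ Iic m).encard ≤ k}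

theorem walk_zero (x : E) (u : ℕ → E) : walk x u 0 = x := by simp [walk]

theorem walk_succ (x : E) (u : ℕ → E) (n : ℕ) : walk x u (n + 1) = walk x u n + u n := by
  simp [walk, Finset.sum_range_succ, add_assoc]

theorem walk_add (x : E) (u : ℕ → E) (m n : ℕ) :
    walk x u (m + n) = walk (walk x u m) (u ∘ (m + ·)) n := by
  simp [walk, Finset.sum_range_add, add_assoc]

theorem dependsOn_walk (x : E) (n : ℕ) : DependsOn (fun u ↦ walk x u n) (Iio n) := fun _ _ h ↦
  congrArg (x + ·) (Finset.sum_congr rfl fun _ hj ↦ h _ (Finset.mem_range.1 hj))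

theorem dependsOn_mem_boundedVisitPaths (A : Set E) (k : ℕ) (x y : E) (m : ℕ) :
    DependsOn (· ∈ boundedVisitPaths A k x y m) (Iio m) := by
  intro u v h
  have hwalk {i : ℕ} (hi : i ≤ m) : walk x u i = walk x v i :=
    dependsOn_walk x i fun j hj ↦ h j (lt_of_lt_of_le hj hi)
  have hvisits : walk x u ⁻¹' A ∩ Iic m = walk x v ⁻¹' A ∩ Iic m := by
    ext i
    exact and_congr_left fun hi ↦ by rw [mem_preimage, hwalk hi, mem_preimage]
  simp only [boundedVisitPaths, mem_ofPred_eq, hwalk le_rfl, hvisits]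

theorem exists_mem_boundedVisitPaths_inter_escapePaths {A : Set E} {k : ℕ} {x : E} {u : ℕ → E}
    (hx : x ∈ A) (hk : (walk x u ⁻¹' A).encard ≤ k) :
    ∃ m, ∃ y ∈ A, u ∈ boundedVisitPaths A k x y m ∩ (· ∘ (m + ·)) ⁻¹' escapePaths A y := by
  obtain ⟨m, hm, hlast⟩ := exists_max_image _ id (finite_of_encard_le_coe hk)
    ⟨0, by rwa [mem_preimage, walk_zero]⟩
  refine ⟨m, walk x u m, hm, ⟨rfl, (encard_mono inter_subset_left).trans hk⟩, fun n hn hmem ↦ ?_⟩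
  rw [← walk_add] at hmem
  exact absurd (hlast (m + n) hmem) (by simp only [id_eq]; omega)

variable [MeasurableSpace E] [MeasurableAdd₂ E]

theorem measurable_walk (x : E) (n : ℕ) : Measurable fun u ↦ walk x u n :=
  (Finset.measurable_sum _ fun j _ ↦ measurable_pi_apply j).const_add x

theorem measurableSet_escapePaths {A : Set E} (hA : MeasurableSet A) (x : E) :
    MeasurableSet (escapePaths A x) := by
  simp only [escapePaths, Set.ofPred_forall]
  exact .iInter fun n ↦ .iInter fun _ ↦ (measurable_walk x n hA).compl

theorem measurable_encard_visits {A : Set E} (hA : MeasurableSet A) (x : E) :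
    Measurable fun u ↦ (walk x u ⁻¹' A).encard :=
  measurable_encard_setOf_mem fun n ↦ measurable_walk x n hA

theorem measurableSet_encard_visits_le {A : Set E} (hA : MeasurableSet A) (k : ℕ) (x : E) (m : ℕ) :
    MeasurableSet {u : ℕ → E | (walk x u ⁻¹' A ∩ Iic m).encard ≤ k} := by
  have hvisits : Measurable fun u ↦ (walk x u ⁻¹' A ∩ Iic m).encard :=
    measurable_encard_setOf_mem fun n ↦ (measurable_walk x n hA).inter (.const (n ≤ m))
  exact hvisits (t := Iic (k : ℕ∞)) .of_discrete

theorem measurableSet_boundedVisitPaths [MeasurableSingletonClass E] {A : Set E}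
    (hA : MeasurableSet A) (k : ℕ) (x y : E) (m : ℕ) :
    MeasurableSet (boundedVisitPaths A k x y m) :=
  (measurable_walk x m (measurableSet_singleton y)).inter (measurableSet_encard_visits_le hA k x m)

/-- The paths contributing to the `m`-th term are those making one of their first `k` visits to `A`
at time `m`. -/
theorem tsum_sum_measure_boundedVisitPaths_le [MeasurableSingletonClass E] (μ : Measure (ℕ → E))
    (A : Finset E) (k : ℕ) (x : E) :
    ∑' m, ∑ y ∈ A, μ (boundedVisitPaths A k x y m) ≤ k * μ univ := by
  let early (m : ℕ) : Set (ℕ → E) := {u | (walk x u ⁻¹' A ∩ Iic m).encard ≤ k}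
  have hearly (m : ℕ) : MeasurableSet (early m) :=
    measurableSet_encard_visits_le A.measurableSet k x m
  have hsum (m : ℕ) : ∑ y ∈ A, μ (boundedVisitPaths A k x y m) =
      μ ({u | walk x u m ∈ A} ∩ early m) := by
    have h := sum_measure_preimage_singleton (μ := μ.restrict (early m)) A
      fun y _ ↦ measurable_walk x m (measurableSet_singleton y)
    simp only [restrict_apply' (hearly m)] at h
    exact h
  calc
    _ = ∑' m, μ ({u | walk x u m ∈ A} ∩ early m) := tsum_congr hsum
    _ = ∫⁻ u, ({m | u ∈ {u | walk x u m ∈ A} ∩ early m}.encard : ℝ≥0∞) ∂μ :=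
      (lintegral_encard_setOf_mem fun m ↦
        (measurable_walk x m A.measurableSet).inter (hearly m)).symm
    _ ≤ ∫⁻ _, (k : ℝ≥0∞) ∂μ := lintegral_mono fun u ↦
      (ENat.toENNReal_le.2 (encard_sep_encard_inter_Iic_le (walk x u ⁻¹' A) k)).trans_eq
        (ENat.toENNReal_coe k)
    _ = k * μ univ := lintegral_const _

end Walk

section Capacity

variable {E : Type*} [AddCommMonoid E] [MeasurableSpace E] (η : Measure E)

/-- The law of an i.i.d. sequence of increments with distribution `η`. The walk under `P_x^η` is
`walk x` under this law. -/
noncomputable abbrev incrementLaw : Measure (ℕ → E) := infinitePi fun _ ↦ η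

/-- The Green function `G_η(x, y)`, the expected number of visits to `y` of the walk started at
`x`. -/
noncomputable def greenFunction (x y : E) : ℝ≥0∞ := ∑' n, incrementLaw η {u | walk x u n = y}

/-- The `η`-capacity `cap_η(A)`, the sum over `A` of the escape probabilities. -/
noncomputable def capacity (A : Finset E) : ℝ≥0∞ := ∑ x ∈ A, incrementLaw η (escapePaths A x)

variable [MeasurableAdd₂ E] [MeasurableSingletonClass E]

theorem lintegral_encard_visits_eq_sum_greenFunction (A : Finset E) (x : E) :
    ∫⁻ u, ((walk x u ⁻¹' A).encard : ℝ≥0∞) ∂incrementLaw η = ∑ y ∈ A, greenFunction η x y := by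
  refine (lintegral_encard_setOf_mem fun n ↦ measurable_walk x n A.measurableSet).trans ?_
  simp only [greenFunction]
  rw [← Summable.tsum_finsetSum fun _ _ ↦ ENNReal.summable]
  exact tsum_congr fun n ↦ (sum_measure_preimage_singleton A fun y _ ↦
    measurable_walk x n (measurableSet_singleton y)).symm

theorem measure_lt_encard_visits_le (A : Finset E) (k : ℕ) (x : E) :
    incrementLaw η {u | k < (walk x u ⁻¹' A).encard} ≤
      (∑ y ∈ A, greenFunction η x y) / (k + 1) := by
  have hmarkov := meas_ge_le_lintegral_div (μ := incrementLaw η) (ε := k + 1)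
    (Measurable.of_discrete (f := ENat.toENNReal) |>.comp
      (measurable_encard_visits A.measurableSet x)).aemeasurable (by simp) (by simp)
  rw [← lintegral_encard_visits_eq_sum_greenFunction]
  refine (measure_mono fun u hu ↦ ?_).trans hmarkov
  change (k : ℝ≥0∞) + 1 ≤ ((walk x u ⁻¹' A).encard : ℝ≥0∞)
  exact_mod_cast ENat.toENNReal_le.2 (Order.add_one_le_of_lt hu)

variable [IsProbabilityMeasure η]

/-- Last-exit decomposition on the event of at most `k` visits, Markov's inequality off it. -/
theorem one_le_sum_greenFunction_div_add (A : Finset E) (k : ℕ) {x : E} (hx : x ∈ A) :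
    1 ≤ (∑ y ∈ A, greenFunction η x y) / (k + 1) +
      ∑' m, ∑ y ∈ A, incrementLaw η (boundedVisitPaths A k x y m) *
        incrementLaw η (escapePaths A y) := by
  let exit (m : ℕ) (y : E) : Set (ℕ → E) :=
    boundedVisitPaths A k x y m ∩ (· ∘ (m + ·)) ⁻¹' escapePaths A y
  have hcover : univ ⊆ {u | k < (walk x u ⁻¹' A).encard} ∪ ⋃ m, ⋃ y ∈ A, exit m y := by
    intro u _
    refine (lt_or_ge (k : ℕ∞) (walk x u ⁻¹' A).encard).imp id fun hu ↦ ?_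
    simp only [mem_iUnion, exists_prop]
    exact exists_mem_boundedVisitPaths_inter_escapePaths (Finset.mem_coe.2 hx) hu
  have hexit (m : ℕ) (y : E) : incrementLaw η (exit m y) =
      incrementLaw η (boundedVisitPaths A k x y m) * incrementLaw η (escapePaths A y) :=
    infinitePi_const_inter_shift_preimage η
      (measurableSet_boundedVisitPaths A.measurableSet k x y m)
      (dependsOn_mem_boundedVisitPaths A k x y m) (measurableSet_escapePaths A.measurableSet y)
  calc
    1 = incrementLaw η univ := measure_univ.symm
    _ ≤ incrementLaw η {u | k < (walk x u ⁻¹' A).encard} +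
        incrementLaw η (⋃ m, ⋃ y ∈ A, exit m y) :=
      (measure_mono hcover).trans (measure_union_le _ _)
    _ ≤ _ := by
      refine add_le_add (measure_lt_encard_visits_le η A k x) ?_
      refine (measure_iUnion_le _).trans (ENNReal.tsum_le_tsum fun m ↦ ?_)
      exact (measure_biUnion_finset_le _ _).trans_eq (Finset.sum_congr rfl fun y _ ↦ hexit m y)

end Capacity

section Reversal

/-- The involution of `ℕ` reversing the order of the first `m` indices, used to run the
increments of a walk backwards from time `m`. -/
def reflectBelow (m i : ℕ) : ℕ := if i < m then m - 1 - i else i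

theorem reflectBelow_involutive (m : ℕ) : (reflectBelow m).Involutive := by
  intro i
  grind [reflectBelow]

variable {E : Type*} [AddCommGroup E]

theorem walk_neg_comp_reflectBelow (x : E) (u : ℕ → E) {m i : ℕ} (hi : i ≤ m) :
    walk (walk x u m) (-u ∘ reflectBelow m) i = walk x u (m - i) := by
  induction i with
  | zero => rw [walk_zero, Nat.sub_zero]
  | succ i ih =>
    have hreflect : reflectBelow m i = m - (i + 1) := by grind [reflectBelow]
    have hsub : m - i = m - (i + 1) + 1 := by omega
    rw [walk_succ, ih (by omega), hsub, walk_succ, Pi.neg_apply, Function.comp_apply, hreflect,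
      add_neg_cancel_right]

theorem neg_comp_reflectBelow_mem_boundedVisitPaths {A : Set E} {k : ℕ} {x y : E} {m : ℕ}
    {u : ℕ → E} (hu : u ∈ boundedVisitPaths A k x y m) :
    -u ∘ reflectBelow m ∈ boundedVisitPaths A k y x m := by
  obtain ⟨rfl, hvisits⟩ := hu
  refine ⟨?_, ?_⟩
  · rw [walk_neg_comp_reflectBelow x u le_rfl, Nat.sub_self, walk_zero]
  · rwa [encard_inter_Iic_eq_of_forall_mem_iff (s := walk x u ⁻¹' A) fun i hi ↦ by
      rw [mem_preimage, mem_preimage, walk_neg_comp_reflectBelow x u hi]]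

theorem neg_comp_reflectBelow_mem_boundedVisitPaths_iff {A : Set E} {k : ℕ} {x y : E} {m : ℕ}
    {u : ℕ → E} :
    -u ∘ reflectBelow m ∈ boundedVisitPaths A k y x m ↔ u ∈ boundedVisitPaths A k x y m := by
  refine ⟨fun hu ↦ ?_, neg_comp_reflectBelow_mem_boundedVisitPaths⟩
  have hinv : -(-u ∘ reflectBelow m) ∘ reflectBelow m = u := by
    ext i
    simp [reflectBelow_involutive m i]
  exact hinv ▸ neg_comp_reflectBelow_mem_boundedVisitPaths hu

variable [MeasurableSpace E] [MeasurableAdd₂ E] [MeasurableSingletonClass E] [MeasurableNeg E]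
  (η : Measure E) [IsProbabilityMeasure η]

theorem incrementLaw_boundedVisitPaths_eq_map_neg {A : Set E} (hA : MeasurableSet A) (k : ℕ)
    (x y : E) (m : ℕ) :
    incrementLaw η (boundedVisitPaths A k x y m) =
      (incrementLaw η).map Neg.neg (boundedVisitPaths A k y x m) := by
  have hV : MeasurableSet (boundedVisitPaths A k y x m) :=
    measurableSet_boundedVisitPaths hA k y x m
  rw [map_apply measurable_neg hV,
    ← infinitePi_const_preimage_comp η (reflectBelow_involutive m).injective (measurable_neg hV)]
  congr 1
  ext u
  exact neg_comp_reflectBelow_mem_boundedVisitPaths_iff.symm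

theorem sum_tsum_incrementLaw_boundedVisitPaths_le (A : Finset E) (k : ℕ) (y : E) :
    ∑ x ∈ A, ∑' m, incrementLaw η (boundedVisitPaths A k x y m) ≤ k := by
  have : IsProbabilityMeasure ((incrementLaw η).map Neg.neg) :=
    isProbabilityMeasure_map measurable_neg.aemeasurable
  simp only [incrementLaw_boundedVisitPaths_eq_map_neg η A.measurableSet]
  rw [← Summable.tsum_finsetSum fun _ _ ↦ ENNReal.summable]
  simpa using tsum_sum_measure_boundedVisitPaths_le ((incrementLaw η).map Neg.neg) A k y

theorem card_le_sum_greenFunction_div_add_mul_capacity (A : Finset E) (k : ℕ) :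
    (A.card : ℝ≥0∞) ≤
      (∑ x ∈ A, ∑ y ∈ A, greenFunction η x y) / (k + 1) + k * capacity η A := by
  have hexits : ∑ x ∈ A, ∑' m, ∑ y ∈ A, incrementLaw η (boundedVisitPaths A k x y m) *
      incrementLaw η (escapePaths A y) ≤ k * capacity η A := by
    calc
      _ = ∑ y ∈ A, (∑ x ∈ A, ∑' m, incrementLaw η (boundedVisitPaths A k x y m)) *
          incrementLaw η (escapePaths A y) := by
        simp only [Finset.sum_mul, ← ENNReal.tsum_mul_right]
        rw [Finset.sum_comm]
        exact Finset.sum_congr rfl fun x _ ↦ Summable.tsum_finsetSum fun _ _ ↦ ENNReal.summable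
      _ ≤ ∑ y ∈ A, k * incrementLaw η (escapePaths A y) := by
        gcongr with y
        exact sum_tsum_incrementLaw_boundedVisitPaths_le η A k y
      _ = k * capacity η A := (Finset.mul_sum _ _ _).symm
  calc
    (A.card : ℝ≥0∞) = ∑ x ∈ A, 1 := by simp
    _ ≤ ∑ x ∈ A, ((∑ y ∈ A, greenFunction η x y) / (k + 1) +
          ∑' m, ∑ y ∈ A, incrementLaw η (boundedVisitPaths A k x y m) *
            incrementLaw η (escapePaths A y)) :=
      Finset.sum_le_sum fun x hx ↦ one_le_sum_greenFunction_div_add η A k hx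
    _ ≤ _ := by
      rw [Finset.sum_add_distrib]
      simp only [div_eq_mul_inv, Finset.sum_mul] at hexits ⊢
      gcongr

theorem card_div_le_capacity_add (A : Finset E) {k : ℕ} (hk : k ≠ 0) :
    (A.card : ℝ≥0∞) / k ≤
      capacity η A + (∑ x ∈ A, ∑ y ∈ A, greenFunction η x y) / (k * (k + 1)) := by
  refine ENNReal.div_le_of_le_mul ?_
  rw [add_mul, mul_comm, add_comm, mul_comm (_ / _), ← mul_div_assoc,
    ENNReal.mul_div_mul_left _ _ (by exact_mod_cast hk) (by simp)]
  exact card_le_sum_greenFunction_div_add_mul_capacity η A k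

variable {η} in
theorem capacity_lower_bound_via_green_general {Ω : Type*} [MeasurableSpace Ω] {P : Measure Ω}
    {ξ : ℕ → Ω → E} (hmeas : ∀ i, Measurable (ξ i)) (hindep : iIndepFun ξ P)
    (hlaw : ∀ i, Measure.map (ξ i) P = η) {G : E → E → ℝ≥0∞}
    (hG : ∀ x y, G x y = ∑' m : ℕ, P {ω | x + ∑ k ∈ Finset.range m, ξ k ω = y})
    (A : Finset E) {k : ℕ} (hk : 1 ≤ k) :
    (A.card : ℝ≥0∞) / k ≤
      ∑ x ∈ A, P {ω | ∀ m : ℕ, 1 ≤ m → x + ∑ j ∈ Finset.range m, ξ j ω ∉ A} +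
        (∑ x ∈ A, ∑ y ∈ A, G x y) / (k * (k + 1)) := by
  have hgreen (x y : E) : G x y = greenFunction η x y := (hG x y).trans <| tsum_congr fun m ↦
    measure_mem_eq_infinitePi hmeas hindep hlaw (measurable_walk x m (measurableSet_singleton y))
  have hcapacity : ∑ x ∈ A, P {ω | ∀ m : ℕ, 1 ≤ m → x + ∑ j ∈ Finset.range m, ξ j ω ∉ A} =
      capacity η A := Finset.sum_congr rfl fun x _ ↦
    measure_mem_eq_infinitePi hmeas hindep hlaw (measurableSet_escapePaths A.measurableSet x)
  simp only [hgreen, hcapacity]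
  exact card_div_le_capacity_add η A (Nat.one_le_iff_ne_zero.1 hk)

end Reversal

/-- For a transient random walk on `ℤ^d` (`d ≥ 3`) with i.i.d. increments of
law `η`, every finite set `A ⊆ ℤ^d` and every positive integer `k`,
`cap_η(A) ≥ #A/(k+1) − (∑_{x,y∈A} G(x,y))/(k(k+1))`. -/
theorem capacity_lower_bound_via_green
    (d : ℕ) (hd : 3 ≤ d)
    {Ω : Type} [MeasurableSpace Ω] (P : Measure Ω) [IsProbabilityMeasure P]
    (η : Measure (Fin d → ℤ)) [IsProbabilityMeasure η]
    (ξ : ℕ → Ω → (Fin d → ℤ))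
    (hmeas : ∀ i, Measurable (ξ i))
    (hindep : iIndepFun ξ P)
    (hlaw : ∀ i, Measure.map (ξ i) P = η)
    (G : (Fin d → ℤ) → (Fin d → ℤ) → ℝ≥0∞)
    (hG : ∀ x y, G x y = ∑' m : ℕ, P {ω | x + ∑ k ∈ Finset.range m, ξ k ω = y})
    (htrans : ∀ x y, G x y < ⊤)
    (A : Finset (Fin d → ℤ)) (k : ℕ) (hk : 1 ≤ k) :
    (A.card : ℝ≥0∞) / ((k : ℝ≥0∞) + 1) -
        (∑ x ∈ A, ∑ y ∈ A, G x y) / ((k : ℝ≥0∞) * ((k : ℝ≥0∞) + 1))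
      ≤ ∑ x ∈ A,
          P {ω | ∀ m : ℕ, 1 ≤ m → x + ∑ j ∈ Finset.range m, ξ j ω ∉ A} := by
  exact tsub_le_iff_right.2 ((ENNReal.div_le_div_left le_self_add _).trans
    (capacity_lower_bound_via_green_general hmeas hindep hlaw hG A hk))
end

section
/- Let (Y_n)_{n≥0} be a random walk on ℤ with Y_0 = 0 and i.i.d. increments, and for n ≥ 1 define the height process H_n := ∑_{k=0}^{n−1} 1{ Y_k = min_{k≤j≤n} Y_j }. Then for each fixed n, H_n has the same distribution as the number of weak ascending records N_n := #{ 1 ≤ k ≤ n : Y_k = max_{0≤j≤k} Y_j }. -/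
open MeasureTheory ProbabilityTheory
open scoped ENNReal

/-!
Reading the first `n` steps of a walk `Y` backwards gives the walk `k ↦ Y n - Y (n - k)`. The
substitution `k ↦ n - k` turns the times counted by the height of `Y` into the weak ascending
records of this dual walk, so the identity in law only needs that the first `n` increments,
taken in reverse order, have the same joint law.
-/

section Paths

open scoped Finset

variable {G : Type*} [Preorder G] [DecidableLE G]

/-- The height `H_n` of a path: the number of times `k < n` at which the path is at its minimum
over `[k, n]`. -/
def pathHeight (y : ℕ → G) (n : ℕ) : ℕ :=
  #{k ∈ Finset.range n | ∀ j ∈ Finset.Icc k n, y k ≤ y j}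

/-- The number `N_n` of weak ascending records of a path: the number of times `1 ≤ k ≤ n` at
which the path is at its maximum over `[0, k]`. Time `0` is not counted. -/
def weakRecordCount (y : ℕ → G) (n : ℕ) : ℕ :=
  #{k ∈ Finset.Icc 1 n | ∀ j ∈ Finset.Icc (0 : ℕ) k, y j ≤ y k}

lemma weakRecordCount_congr {y z : ℕ → G} {n : ℕ} (hyz : ∀ k ≤ n, y k = z k) :
    weakRecordCount y n = weakRecordCount z n := by
  refine congrArg Finset.card (Finset.filter_congr fun k hk => forall₂_congr fun j hj => ?_)
  rw [Finset.mem_Icc] at hk hj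
  rw [hyz k hk.2, hyz j (hj.2.trans hk.2)]

end Paths

lemma pathHeight_eq_weakRecordCount_dual {G : Type*} [AddCommGroup G] [Preorder G]
    [IsOrderedAddMonoid G] [DecidableLE G] (y : ℕ → G) (n : ℕ) :
    pathHeight y n = weakRecordCount (fun k => y n - y (n - k)) n := by
  have min_iff_record (k : ℕ) (hk : k ≤ n) : (∀ j ∈ Finset.Icc k n, y k ≤ y j) ↔
      ∀ j ∈ Finset.Icc 0 (n - k), y n - y (n - j) ≤ y n - y (n - (n - k)) := by
    simp only [sub_le_sub_iff_left, Finset.mem_Icc, Nat.sub_sub_self hk]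
    refine ⟨fun h j hj => h (n - j) (by lia), fun h j hj => ?_⟩
    simpa only [Nat.sub_sub_self hj.2] using h (n - j) (by lia)
  simp only [pathHeight, weakRecordCount, Finset.card_filter]
  refine Finset.sum_nbij' (n - ·) (n - ·) ?_ ?_ ?_ ?_ fun k hk =>
    if_congr (min_iff_record k (Finset.mem_range_le hk)) rfl rfl
  all_goals
    simp only [Finset.mem_range, Finset.mem_Icc]
    lia

lemma measurable_weakRecordCount {G : Type*} [PartialOrder G] [DecidableLE G] [TopologicalSpace G]
    [OrderClosedTopology G] [SecondCountableTopology G] [MeasurableSpace G]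
    [OpensMeasurableSpace G] (n : ℕ) :
    Measurable fun y : ℕ → G => weakRecordCount y n := by
  simp only [weakRecordCount, Finset.card_filter]
  refine Finset.measurable_fun_sum _ fun k _ => Measurable.ite ?_ measurable_const measurable_const
  simp only [Set.ofPred_forall]
  exact Finset.measurableSet_biInter _ fun j _ =>
    measurableSet_le (measurable_pi_apply j) (measurable_pi_apply k)

section FiniteWalk

variable {G : Type*} {n : ℕ}

/-- The walk started at `0` with the `n` increments `x`. It is indexed by `ℕ`, and constant from
time `n` on, so that it can be compared with an infinite walk. -/
def finiteWalk [AddCommMonoid G] (x : Fin n → G) (k : ℕ) : G :=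
  ∑ i with i.val < k, x i

lemma finiteWalk_eq_sum_range [AddCommMonoid G] (a : ℕ → G) {k : ℕ} (hk : k ≤ n) :
    finiteWalk (fun i : Fin n => a i) k = ∑ i ∈ Finset.range k, a i := by
  have first_steps : (Finset.range n).filter (· < k) = Finset.range k := by grind
  rw [finiteWalk, Finset.sum_filter, Fin.sum_univ_eq_sum_range (fun i => if i < k then a i else 0),
    ← Finset.sum_filter, first_steps]

lemma finiteWalk_rev [AddCommGroup G] (x : Fin n → G) {k : ℕ} (hk : k ≤ n) :
    finiteWalk (fun i => x i.rev) k = finiteWalk x n - finiteWalk x (n - k) := by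
  have last_steps : finiteWalk (fun i => x i.rev) k = ∑ i with ¬ i.val < n - k, x i := by
    refine Finset.sum_equiv Fin.revPerm (fun i => ?_) fun i _ => rfl
    simp only [Finset.mem_filter_univ, Fin.revPerm_apply, Fin.val_rev]
    lia
  have all_steps : finiteWalk x n = ∑ i, x i := by
    simp only [finiteWalk, Fin.is_lt, Finset.filter_true]
  rw [last_steps, all_steps, eq_sub_iff_add_eq', finiteWalk, Finset.sum_filter_add_sum_filter_not]

lemma measurable_finiteWalk [AddCommMonoid G] [MeasurableSpace G] [MeasurableAdd₂ G] :
    Measurable (finiteWalk : (Fin n → G) → ℕ → G) :=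
  measurable_pi_lambda _ fun _ => Finset.measurable_fun_sum _ fun i _ => measurable_pi_apply i

end FiniteWalk

lemma identDistrib_reindex_of_injective {Ω E ι κ : Type*} [MeasurableSpace Ω] {P : Measure Ω}
    [MeasurableSpace E] [Countable ι] {ξ : κ → Ω → E} (hindep : iIndepFun ξ P)
    (hident : ∀ i j, IdentDistrib (ξ i) (ξ j) P P) {f g : ι → κ} (hf : f.Injective)
    (hg : g.Injective) :
    IdentDistrib (fun ω i => ξ (f i) ω) (fun ω i => ξ (g i) ω) P P :=
  IdentDistrib.pi (fun i => hident (f i) (g i)) (hindep.precomp hf) (hindep.precomp hg)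

lemma identDistrib_rev_of_iIndepFun {Ω E : Type*} [MeasurableSpace Ω] {P : Measure Ω}
    [MeasurableSpace E] {ξ : ℕ → Ω → E} (hindep : iIndepFun ξ P)
    (hident : ∀ i j, IdentDistrib (ξ i) (ξ j) P P) (n : ℕ) :
    IdentDistrib (fun ω (i : Fin n) => ξ i ω) (fun ω (i : Fin n) => ξ i.rev ω) P P :=
  identDistrib_reindex_of_injective hindep hident Fin.val_injective
    (Fin.val_injective.comp Fin.rev_injective)

theorem height_process_eq_records_in_law_general {Ω G : Type*} [MeasurableSpace Ω] {P : Measure Ω}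
    [AddCommGroup G] [PartialOrder G] [IsOrderedAddMonoid G] [DecidableLE G] [TopologicalSpace G]
    [OrderClosedTopology G] [SecondCountableTopology G] [MeasurableSpace G]
    [OpensMeasurableSpace G] [MeasurableAdd₂ G] {ξ : ℕ → Ω → G} {Y : ℕ → Ω → G}
    (hY : ∀ k ω, Y k ω = ∑ i ∈ Finset.range k, ξ i ω) {n : ℕ}
    (hrev : IdentDistrib (fun ω (i : Fin n) => ξ i ω) (fun ω (i : Fin n) => ξ i.rev ω) P P) :
    IdentDistrib (fun ω => pathHeight (Y · ω) n) (fun ω => weakRecordCount (Y · ω) n) P P := by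
  have walk_eq (ω : Ω) (k : ℕ) (hk : k ≤ n) : Y k ω = finiteWalk (fun i : Fin n => ξ i ω) k :=
    (hY k ω).trans (finiteWalk_eq_sum_range (ξ · ω) hk).symm
  have records_eq (ω : Ω) : weakRecordCount (Y · ω) n =
      weakRecordCount (finiteWalk fun i : Fin n => ξ i ω) n :=
    weakRecordCount_congr (walk_eq ω)
  have height_eq (ω : Ω) : pathHeight (Y · ω) n =
      weakRecordCount (finiteWalk fun i : Fin n => ξ i.rev ω) n := by
    rw [pathHeight_eq_weakRecordCount_dual]
    refine weakRecordCount_congr fun k hk => ?_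
    rw [finiteWalk_rev (fun i : Fin n => ξ i ω) hk, walk_eq ω n le_rfl,
      walk_eq ω (n - k) (Nat.sub_le n k)]
  simp only [records_eq, height_eq]
  exact hrev.symm.comp ((measurable_weakRecordCount n).comp measurable_finiteWalk)

/-- For a random walk `Y` on `ℤ` with i.i.d. increments, the height process
`H_n = ∑_{k=0}^{n−1} 1{Y_k = min_{k≤j≤n} Y_j}` has, for each fixed `n`, the same distribution
as the number of weak ascending records `N_n = #{1 ≤ k ≤ n : Y_k = max_{0≤j≤k} Y_j}`. -/
theorem height_process_eq_records_in_law
    {Ω : Type} [MeasurableSpace Ω] (P : Measure Ω) [IsProbabilityMeasure P]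
    (ξ : ℕ → Ω → ℤ)
    (hmeas : ∀ i, Measurable (ξ i))
    (hindep : iIndepFun ξ P)
    (hident : ∀ i, Measure.map (ξ i) P = Measure.map (ξ 0) P)
    (Y : ℕ → Ω → ℤ) (hY : ∀ n ω, Y n ω = ∑ i ∈ Finset.range n, ξ i ω)
    (n : ℕ) :
    Measure.map (fun ω => ∑ k ∈ Finset.range n,
        @ite ℕ (∀ j ∈ Finset.Icc k n, Y k ω ≤ Y j ω) Finset.decidableDforallFinset 1 0) P
      = Measure.map (fun ω => ∑ k ∈ Finset.Icc 1 n,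
        @ite ℕ (∀ j ∈ Finset.Icc 0 k, Y j ω ≤ Y k ω) Finset.decidableDforallFinset 1 0) P := by
  have same_law (i j : ℕ) : IdentDistrib (ξ i) (ξ j) P P :=
    ⟨(hmeas i).aemeasurable, (hmeas j).aemeasurable, (hident i).trans (hident j).symm⟩
  simpa only [pathHeight, weakRecordCount, Finset.card_filter] using
    (height_process_eq_records_in_law_general hY
      (identDistrib_rev_of_iIndepFun hindep same_law n)).map_eq
end

section
/- Let (Y_n)_{n≥0} be the left-continuous random walk with Y_0 = 0 and i.i.d. increments ξ_i satisfying ξ_1 ≥ −1 almost surely, E[ξ_1] = 0, E[ξ_1²] < ∞ and P(ξ_1 = 0) < 1, and let H_n := ∑_{k=0}^{n−1} 1{ Y_k = min_{k≤j≤n} Y_j } be the height process (H_0 := 0). Then almost surely max_{0≤i≤n} H_i ≤ n^{1/2+o(1)}; that is, almost surely, for every ε > 0, max_{0≤i≤n} H_i ≤ n^{1/2+ε} for all sufficiently large n. -/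
open MeasureTheory ProbabilityTheory
open scoped ENNReal

open Filter Finset

/-!
Reversing the steps before time `n` preserves their joint law and turns `H_n` into the number of
weak ladder epochs in `[1, n]`, that is of zeros of the walk `W` with steps `-ξ` reflected at `0`.
Since `E[ξ] = 0`, reflection can only raise the mean of `W`, and it raises it by at least
`E[ξ⁺] > 0` for each step that `W` takes from `0`. Hence the expected number of zeros up to time `n`
is at most `E[W_{n+1}] / E[ξ⁺] = O(√n)`.

By Markov's inequality, the probability of more than `n^{1/2 + δ}` ladder epochs is `O(n^{-δ})`.
The walk starts afresh at each ladder epoch, so the tail of their number is submultiplicative and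
the probability of more than `j n^{1/2 + δ}` of them is `O(n^{-jδ})`, which is summable as soon as
`jδ > 1`.
-/

section Deterministic

/-- The permutation of `ℕ` that reverses `{0, …, n - 1}` and fixes everything else. -/
def reverseBelow (n i : ℕ) : ℕ := if i < n then n - 1 - i else i

lemma reverseBelow_injective (n : ℕ) : Function.Injective (reverseBelow n) := by
  intro i j h
  grind [reverseBelow]

lemma sum_range_reverseBelow {M : Type*} [AddCommGroup M] (x : ℕ → M) {m n : ℕ}
    (hmn : m ≤ n) :
    ∑ i ∈ range m, x (reverseBelow n i) = ∑ i ∈ range n, x i - ∑ i ∈ range (n - m), x i := by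
  induction m with
  | zero => simp
  | succ m ih =>
    have hrev : reverseBelow n m = n - (m + 1) := by grind [reverseBelow]
    rw [sum_range_succ, ih (by omega), show n - m = n - (m + 1) + 1 by omega, sum_range_succ, hrev]
    abel

variable {G : Type*} [AddCommGroup G] [LinearOrder G]

/-- The walk with steps `-x i` started at `0` and reflected at `0` (Lindley recursion). At time `n`
it is the distance from the partial sum `∑ i < n, x i` up to the running maximum. -/
def reflectedWalk (x : ℕ → G) : ℕ → G
  | 0 => 0
  | n + 1 => (reflectedWalk x n - x n)⁺

/-- The number of weak ascending ladder epochs in `[1, n]`, that is of times at which the partial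
sums of `x` are at their running maximum. -/
def ladderCount (x : ℕ → G) (n : ℕ) : ℕ := #{m ∈ range n | reflectedWalk x (m + 1) = 0}

/-- `m` is the `a`-th weak ascending ladder epoch of `x`; the `0`-th one is `0`. -/
def IsLadderEpoch (x : ℕ → G) (a m : ℕ) : Prop := IsLeast {k | a ≤ ladderCount x k} m

/-- The number of times in `[0, n)` whose partial sum of `x` is the minimum from then until `n`.
For the Łukasiewicz path of a forest, this is the height of the `n`-th vertex. -/
def heightProcess (x : ℕ → G) (n : ℕ) : ℕ :=
  #{k ∈ range n | ∀ j ∈ Icc k n, ∑ i ∈ range k, x i ≤ ∑ i ∈ range j, x i}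

lemma reflectedWalk_nonneg (x : ℕ → G) : ∀ n, 0 ≤ reflectedWalk x n
  | 0 => le_rfl
  | _ + 1 => posPart_nonneg _

lemma ladderCount_succ (x : ℕ → G) (n : ℕ) :
    ladderCount x (n + 1) = ladderCount x n + if reflectedWalk x (n + 1) = 0 then 1 else 0 := by
  simp only [ladderCount, card_filter, sum_range_succ]

lemma ladderCount_mono (x : ℕ → G) : Monotone (ladderCount x) :=
  monotone_nat_of_le_succ fun n ↦ by grind [ladderCount_succ]

lemma IsLadderEpoch.ladderCount_le {x : ℕ → G} {a m : ℕ} (h : IsLadderEpoch x a m) :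
    ladderCount x m ≤ a := by
  cases m with
  | zero => exact Nat.zero_le a
  | succ m =>
    have : ladderCount x m < a := not_le.1 fun ha ↦ (h.2 ha).not_gt m.lt_succ_self
    grind [ladderCount_succ]

lemma isLadderEpoch_iff {x : ℕ → G} {a m : ℕ} :
    IsLadderEpoch x a m ↔ a ≤ ladderCount x m ∧ ∀ k < m, ladderCount x k < a := by
  simp only [IsLadderEpoch, IsLeast, mem_lowerBounds, Set.mem_ofPred_eq]
  grind

lemma exists_isLadderEpoch {x : ℕ → G} {a n : ℕ} (h : a ≤ ladderCount x n) :
    ∃ m ≤ n, IsLadderEpoch x a m := by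
  classical
  have hex : ∃ k, a ≤ ladderCount x k := ⟨n, h⟩
  exact ⟨Nat.find hex, Nat.find_min' hex h, Nat.find_spec hex, fun _ ↦ Nat.find_min' hex⟩

variable [IsOrderedAddMonoid G]

lemma reflectedWalk_le_iff (x : ℕ → G) {n : ℕ} {c : G} :
    reflectedWalk x n ≤ c ↔ ∀ j ≤ n, ∑ i ∈ range j, x i - ∑ i ∈ range n, x i ≤ c := by
  induction n generalizing c with
  | zero => simp [reflectedWalk]
  | succ n ih =>
    simp only [reflectedWalk, posPart_def, sup_le_iff, sub_le_iff_le_add, ih, sum_range_succ,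
      Nat.le_succ_iff_eq_or_le, forall_eq_or_imp]
    grind

lemma reflectedWalk_eq_zero_iff (x : ℕ → G) {n : ℕ} :
    reflectedWalk x n = 0 ↔ ∀ j ≤ n, ∑ i ∈ range j, x i ≤ ∑ i ∈ range n, x i := by
  simp only [← (reflectedWalk_nonneg x n).ge_iff_eq', reflectedWalk_le_iff, sub_nonpos]

lemma reflectedWalk_shift_le (x : ℕ → G) (m n : ℕ) :
    reflectedWalk (fun i ↦ x (m + i)) n ≤ reflectedWalk x (m + n) := by
  induction n with
  | zero => exact reflectedWalk_nonneg x m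
  | succ n ih => exact posPart_mono (sub_le_sub_right ih _)

lemma ladderCount_add_le (x : ℕ → G) (m n : ℕ) :
    ladderCount x (m + n) ≤ ladderCount x m + ladderCount (fun i ↦ x (m + i)) n := by
  induction n with
  | zero => simp
  | succ n ih =>
    have hshift := reflectedWalk_shift_le x m (n + 1)
    have hnonneg := reflectedWalk_nonneg (fun i ↦ x (m + i)) (n + 1)
    rw [← add_assoc, ladderCount_succ, ladderCount_succ]
    grind

lemma exists_isLadderEpoch_and_le_ladderCount_shift {x : ℕ → G} {a b n : ℕ}
    (h : a + b ≤ ladderCount x n) :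
    ∃ m ≤ n, IsLadderEpoch x a m ∧ b ≤ ladderCount (fun i ↦ x (m + i)) n := by
  obtain ⟨m, hmn, hm⟩ := exists_isLadderEpoch (le_of_add_le_left h)
  refine ⟨m, hmn, hm, ?_⟩
  have hadd := ladderCount_add_le x m (n - m)
  have hmono := ladderCount_mono (fun i ↦ x (m + i)) (Nat.sub_le n m)
  have hle := hm.ladderCount_le
  rw [Nat.add_sub_cancel' hmn] at hadd
  omega

lemma heightProcess_eq_ladderCount_reverse (x : ℕ → G) (n : ℕ) :
    heightProcess x n = ladderCount (fun i ↦ x (reverseBelow n i)) n := by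
  simp only [heightProcess, ladderCount, card_filter]
  rw [← sum_range_reflect]
  refine sum_congr rfl fun m hm ↦ if_congr ?_ rfl rfl
  have hm : m < n := mem_range.1 hm
  rw [reflectedWalk_eq_zero_iff]
  constructor
  · intro h j hj
    rw [sum_range_reverseBelow x hm, sum_range_reverseBelow x (by omega : j ≤ n)]
    exact sub_le_sub_left (by simpa [Nat.sub_sub, add_comm] using h (n - j) (by grind)) _
  · intro h j hj
    have := h (n - j) (by grind)
    rw [sum_range_reverseBelow x hm, sum_range_reverseBelow x (by omega : n - j ≤ n),
      sub_le_sub_iff_left, show n - (n - j) = j by grind] at this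
    rwa [show n - 1 - m = n - (m + 1) by omega]

end Deterministic

lemma eventually_natCast_mul_ceil_rpow_le (j : ℕ) {p q : ℝ} (hp : 0 ≤ p) (hpq : p < q) :
    ∀ᶠ n : ℕ in atTop, (j * ⌈(n : ℝ) ^ p⌉₊ : ℝ) ≤ (n : ℝ) ^ q := by
  have hlarge : ∀ᶠ n : ℕ in atTop, (2 * j : ℝ) ≤ (n : ℝ) ^ (q - p) :=
    ((tendsto_rpow_atTop (sub_pos.2 hpq)).comp tendsto_natCast_atTop_atTop).eventually_ge_atTop _
  filter_upwards [hlarge, eventually_ge_atTop 1] with n hn hn1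
  have hone : 1 ≤ (n : ℝ) ^ p := Real.one_le_rpow (by exact_mod_cast hn1) hp
  calc (j * ⌈(n : ℝ) ^ p⌉₊ : ℝ)
      ≤ j * (2 * (n : ℝ) ^ p) := by gcongr; exact Nat.ceil_le_two_mul (by linarith)
    _ = 2 * j * (n : ℝ) ^ p := by ring
    _ ≤ (n : ℝ) ^ (q - p) * (n : ℝ) ^ p := by gcongr
    _ = (n : ℝ) ^ q := by rw [← Real.rpow_add (by positivity), sub_add_cancel]

lemma eventually_sup_range_succ_le {f : ℕ → ℕ} {g : ℕ → ℝ} (hg : Monotone g)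
    (hg_top : Tendsto g atTop atTop) (hfg : ∀ᶠ n in atTop, (f n : ℝ) ≤ g n) :
    ∀ᶠ n in atTop, (((range (n + 1)).sup f : ℕ) : ℝ) ≤ g n := by
  obtain ⟨N, hN⟩ := eventually_atTop.1 hfg
  filter_upwards [hg_top.eventually_ge_atTop (((range N).sup f : ℕ) : ℝ)] with n hn
  obtain ⟨i, hi, hsup⟩ := exists_mem_eq_sup (range (n + 1)) nonempty_range_add_one f
  rw [hsup]
  rcases lt_or_ge i N with hiN | hiN
  · exact (Nat.cast_le.2 (le_sup (mem_range.2 hiN))).trans hn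
  · exact (hN i hiN).trans (hg (mem_range_succ_iff.1 hi))

lemma integral_posPart_pos {Ω : Type*} [MeasurableSpace Ω] {P : Measure Ω} {X : Ω → ℝ}
    (hX : Integrable X P) (hmean : ∫ ω, X ω ∂P = 0) (hne : ¬ X =ᵐ[P] 0) :
    0 < ∫ ω, (X ω)⁺ ∂P := by
  refine (integral_nonneg fun ω ↦ posPart_nonneg _).lt_of_ne' fun hzero ↦ hne ?_
  have hpos : (fun ω ↦ (X ω)⁺) =ᵐ[P] 0 :=
    (integral_eq_zero_iff_of_nonneg (fun ω ↦ posPart_nonneg _) hX.pos_part).1 hzero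
  have hnonpos : 0 ≤ᵐ[P] -X := hpos.mono fun ω hω ↦ neg_nonneg.2 (posPart_eq_zero.1 hω)
  have hneg := (integral_eq_zero_iff_of_nonneg_ae hnonpos hX.neg).1 (by
    simp only [Pi.neg_apply, integral_neg, hmean, neg_zero])
  exact hneg.mono fun ω hω ↦ neg_eq_zero.1 hω

lemma integral_sub_sq_of_indepFun {Ω : Type*} [MeasurableSpace Ω] {P : Measure Ω} {X Y : Ω → ℝ}
    (hX : MemLp X 2 P) (hY : MemLp Y 2 P) (hXY : IndepFun X Y P) (hY0 : ∫ ω, Y ω ∂P = 0) :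
    ∫ ω, (X ω - Y ω) ^ 2 ∂P = ∫ ω, X ω ^ 2 ∂P + ∫ ω, Y ω ^ 2 ∂P := by
  have hcross : ∫ ω, X ω * Y ω ∂P = 0 := by
    rw [hXY.integral_fun_mul_eq_mul_integral hX.1 hY.1, hY0, mul_zero]
  have hprod : Integrable (fun ω ↦ 2 * (X ω * Y ω)) P := (hX.integrable_mul hY).const_mul 2
  have hsq : Integrable (fun ω ↦ X ω ^ 2 + Y ω ^ 2) P := hX.integrable_sq.add hY.integrable_sq
  calc ∫ ω, (X ω - Y ω) ^ 2 ∂P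
      = ∫ ω, (X ω ^ 2 + Y ω ^ 2 - 2 * (X ω * Y ω)) ∂P := by congr with ω; ring
    _ = ∫ ω, X ω ^ 2 ∂P + ∫ ω, Y ω ^ 2 ∂P := by
      rw [integral_sub hsq hprod, integral_add hX.integrable_sq hY.integrable_sq,
        integral_const_mul, hcross, mul_zero, sub_zero]

section Probability

/-- The law on sequences of i.i.d. coordinates with marginal `μ`. -/
noncomputable abbrev iidLaw {E : Type*} [MeasurableSpace E] (μ : Measure E) : Measure (ℕ → E) :=
  Measure.infinitePi fun _ ↦ μ

lemma indep_cylinderEvents_infinitePi {ι : Type*} {E : ι → Type*} [∀ i, MeasurableSpace (E i)]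
    (μ : ∀ i, Measure (E i)) [∀ i, IsProbabilityMeasure (μ i)] {S T : Set ι} (hST : Disjoint S T) :
    Indep (cylinderEvents S) (cylinderEvents T) (Measure.infinitePi μ) :=
  indep_iSup_of_disjoint (fun i ↦ (measurable_pi_apply i).comap_le)
    ((iIndepFun_iff_iIndep _ _ _).1 (iIndepFun_infinitePi fun _ ↦ measurable_id)) hST

lemma measurePreserving_reindex_iidLaw {E : Type*} [MeasurableSpace E] (μ : Measure E)
    [IsProbabilityMeasure μ] {g : ℕ → ℕ} (hg : g.Injective) :
    MeasurePreserving (fun (x : ℕ → E) i ↦ x (g i)) (iidLaw μ) (iidLaw μ) :=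
  ⟨by fun_prop, Measure.map_infinitePi_infinitePi_of_inj hg⟩

lemma measurable_shift_cylinderEvents_Ici {E : Type*} [MeasurableSpace E] (m : ℕ) :
    Measurable[cylinderEvents (Set.Ici m)] fun (x : ℕ → E) i ↦ x (m + i) :=
  @measurable_pi_lambda _ _ _ (_) _ _ fun i ↦
    measurable_cylinderEvent_apply (Set.mem_Ici.2 (m.le_add_right i))

lemma measurable_reflectedWalk (n : ℕ) :
    Measurable[cylinderEvents (Set.Iio n)] fun x : ℕ → ℝ ↦ reflectedWalk x n := by
  induction n with
  | zero => exact measurable_const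
  | succ n ih =>
    have hwalk := ih.mono (cylinderEvents_mono (Set.Iio_subset_Iio n.le_succ)) le_rfl
    exact (hwalk.sub (measurable_cylinderEvent_apply n.lt_succ_self)).max measurable_const

lemma measurable_ladderCount (n : ℕ) :
    Measurable[cylinderEvents (Set.Iio n)] fun x : ℕ → ℝ ↦ ladderCount x n := by
  simp only [ladderCount, card_filter]
  refine Finset.measurable_sum _ fun m hm ↦ ?_
  have hwalk := (measurable_reflectedWalk (m + 1)).mono
    (cylinderEvents_mono (Set.Iio_subset_Iio (mem_range.1 hm))) le_rfl
  exact Measurable.ite (hwalk (measurableSet_singleton 0)) measurable_const measurable_const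

lemma measurableSet_isLadderEpoch (a m : ℕ) :
    MeasurableSet[cylinderEvents (Set.Iio m)] {x : ℕ → ℝ | IsLadderEpoch x a m} := by
  simp only [isLadderEpoch_iff, Set.ofPred_and, Set.ofPred_forall]
  refine (measurable_ladderCount m measurableSet_Ici).inter
    (.iInter fun k ↦ .iInter fun hk ↦ ?_)
  exact cylinderEvents_mono (Set.Iio_subset_Iio hk.le) _
    (measurable_ladderCount k measurableSet_Iio)

variable {μ : Measure ℝ} [IsProbabilityMeasure μ]

lemma measureReal_isLadderEpoch_inter_shift {a m b n : ℕ} :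
    (iidLaw μ).real ({x | IsLadderEpoch x a m} ∩ {x | b ≤ ladderCount (fun i ↦ x (m + i)) n}) =
      (iidLaw μ).real {x | IsLadderEpoch x a m} * (iidLaw μ).real {x | b ≤ ladderCount x n} := by
  have hcount : MeasurableSet {x : ℕ → ℝ | b ≤ ladderCount x n} :=
    cylinderEvents_le_pi _ (measurable_ladderCount n measurableSet_Ici)
  have hindep := (Indep_iff _ _ _).1
    (indep_cylinderEvents_infinitePi (fun _ : ℕ ↦ μ) (Set.Iio_disjoint_Ici le_rfl)) _ _
    (measurableSet_isLadderEpoch a m) (measurable_shift_cylinderEvents_Ici m hcount)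
  have hshift := (measurePreserving_reindex_iidLaw μ (add_right_injective m)).measureReal_preimage
    hcount.nullMeasurableSet
  rw [← hshift, measureReal_def, measureReal_def, measureReal_def, ← ENNReal.toReal_mul]
  exact congrArg ENNReal.toReal hindep

/-- After a ladder epoch the walk starts afresh. -/
lemma measureReal_add_le_ladderCount_le (μ : Measure ℝ) [IsProbabilityMeasure μ] (a b n : ℕ) :
    (iidLaw μ).real {x | a + b ≤ ladderCount x n} ≤
      (iidLaw μ).real {x | a ≤ ladderCount x n} * (iidLaw μ).real {x | b ≤ ladderCount x n} := by
  set A : ℕ → Set (ℕ → ℝ) := fun m ↦ {x | IsLadderEpoch x a m}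
  set B : ℕ → Set (ℕ → ℝ) := fun m ↦ {x | b ≤ ladderCount (fun i ↦ x (m + i)) n}
  have hcover : {x | a + b ≤ ladderCount x n} ⊆ ⋃ m ∈ range (n + 1), A m ∩ B m := fun x hx ↦ by
    obtain ⟨m, hmn, hA, hB⟩ := exists_isLadderEpoch_and_le_ladderCount_shift hx
    exact Set.mem_biUnion (mem_coe.2 (mem_range_succ_iff.2 hmn)) ⟨hA, hB⟩
  have hdisj : (range (n + 1) : Set ℕ).PairwiseDisjoint A := fun m _ m' _ hne ↦
    Set.disjoint_left.2 fun x hm hm' ↦ hne (IsLeast.unique hm hm')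
  have hsub : ⋃ m ∈ range (n + 1), A m ⊆ {x | a ≤ ladderCount x n} :=
    Set.iUnion₂_subset fun m hm x hx ↦
      hx.1.trans (ladderCount_mono x (mem_range_succ_iff.1 hm))
  calc (iidLaw μ).real {x | a + b ≤ ladderCount x n}
      ≤ (iidLaw μ).real (⋃ m ∈ range (n + 1), A m ∩ B m) :=
          measureReal_mono hcover (measure_ne_top _ _)
    _ ≤ ∑ m ∈ range (n + 1), (iidLaw μ).real (A m ∩ B m) := measureReal_biUnion_finset_le _ _
    _ = (∑ m ∈ range (n + 1), (iidLaw μ).real (A m)) *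
          (iidLaw μ).real {x | b ≤ ladderCount x n} := by
      simp only [A, B, measureReal_isLadderEpoch_inter_shift, sum_mul]
    _ = (iidLaw μ).real (⋃ m ∈ range (n + 1), A m) *
          (iidLaw μ).real {x | b ≤ ladderCount x n} := by
      rw [measureReal_biUnion_finset hdisj fun m _ ↦
        cylinderEvents_le_pi _ (measurableSet_isLadderEpoch a m)]
    _ ≤ _ := mul_le_mul_of_nonneg_right (measureReal_mono hsub) measureReal_nonneg

lemma measureReal_mul_le_ladderCount_le (μ : Measure ℝ) [IsProbabilityMeasure μ] (j a n : ℕ) :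
    (iidLaw μ).real {x | j * a ≤ ladderCount x n} ≤
      (iidLaw μ).real {x | a ≤ ladderCount x n} ^ j := by
  induction j with
  | zero => simp
  | succ j ih =>
    rw [add_one_mul, pow_succ]
    exact (measureReal_add_le_ladderCount_le μ _ a n).trans
      (mul_le_mul_of_nonneg_right ih measureReal_nonneg)

lemma memLp_eval_iidLaw {p : ℝ≥0∞} (hμ : MemLp id p μ) (n : ℕ) :
    MemLp (fun x ↦ x n) p (iidLaw μ) :=
  hμ.comp_measurePreserving (measurePreserving_eval_infinitePi _ n)

lemma integral_comp_eval_iidLaw {f : ℝ → ℝ} (hf : AEStronglyMeasurable f μ) (n : ℕ) :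
    ∫ x, f (x n) ∂iidLaw μ = ∫ y, f y ∂μ :=
  HasLaw.integral_comp (measurePreserving_eval_infinitePi (fun _ ↦ μ) n).hasLaw hf

lemma memLp_reflectedWalk {p : ℝ≥0∞} (hμ : MemLp id p μ) (n : ℕ) :
    MemLp (fun x ↦ reflectedWalk x n) p (iidLaw μ) := by
  induction n with
  | zero => exact MemLp.zero
  | succ n ih => exact (ih.sub (memLp_eval_iidLaw hμ n)).pos_part

lemma indepFun_reflectedWalk_eval (μ : Measure ℝ) [IsProbabilityMeasure μ] (n : ℕ) :
    IndepFun (fun x ↦ reflectedWalk x n) (fun x ↦ x n) (iidLaw μ) := by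
  rw [IndepFun_iff_Indep]
  exact indep_of_indep_of_le_left (indep_of_indep_of_le_right
    (indep_cylinderEvents_infinitePi _ (Set.Iio_disjoint_Ici le_rfl))
    (measurable_cylinderEvent_apply Set.self_mem_Ici).comap_le)
    (measurable_reflectedWalk n).comap_le

lemma integral_reflectedWalk_sq_le (hμ : MemLp id 2 μ) (hmean : ∫ y, y ∂μ = 0) (n : ℕ) :
    ∫ x, reflectedWalk x n ^ 2 ∂iidLaw μ ≤ n * ∫ y, y ^ 2 ∂μ := by
  induction n with
  | zero => simp [reflectedWalk]
  | succ n ih =>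
    have hW := memLp_reflectedWalk hμ n
    have hX := memLp_eval_iidLaw hμ n
    have hX0 : ∫ x, x n ∂iidLaw μ = 0 := (integral_comp_eval_iidLaw hμ.1 n).trans hmean
    calc ∫ x, reflectedWalk x (n + 1) ^ 2 ∂iidLaw μ
        ≤ ∫ x, (reflectedWalk x n - x n) ^ 2 ∂iidLaw μ := by
          refine integral_mono (memLp_reflectedWalk hμ (n + 1)).integrable_sq
            (hW.sub hX).integrable_sq fun x ↦ ?_
          rw [← sq_abs (reflectedWalk x n - x n)]
          exact pow_le_pow_left₀ (posPart_nonneg _) (sup_le (le_abs_self _) (abs_nonneg _)) 2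
      _ = ∫ x, reflectedWalk x n ^ 2 ∂iidLaw μ + ∫ y, y ^ 2 ∂μ := by
          rw [integral_sub_sq_of_indepFun hW hX (indepFun_reflectedWalk_eval μ n) hX0,
            integral_comp_eval_iidLaw (f := fun y ↦ y ^ 2) (by fun_prop) n]
      _ ≤ (n + 1 : ℕ) * ∫ y, y ^ 2 ∂μ := by push_cast; linarith

lemma integral_reflectedWalk_le (hμ : MemLp id 2 μ) (hmean : ∫ y, y ∂μ = 0) (n : ℕ) :
    ∫ x, reflectedWalk x n ∂iidLaw μ ≤ √(n * ∫ y, y ^ 2 ∂μ) := by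
  have hvar := variance_nonneg (fun x ↦ reflectedWalk x n) (iidLaw μ)
  rw [variance_eq_sub (memLp_reflectedWalk hμ n), sub_nonneg] at hvar
  exact Real.le_sqrt_of_sq_le (hvar.trans (integral_reflectedWalk_sq_le hμ hmean n))

lemma sub_add_indicator_mul_posPart_le_reflectedWalk (x : ℕ → ℝ) (n : ℕ) :
    reflectedWalk x n - x n + ({0} : Set ℝ).indicator 1 (reflectedWalk x n) * (x n)⁺ ≤
      reflectedWalk x (n + 1) := by
  by_cases hn : reflectedWalk x n = 0
  · have hsub := posPart_sub_negPart (x n)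
    simp only [reflectedWalk, hn, Set.indicator_of_mem (Set.mem_singleton _), zero_sub, posPart_neg,
      Pi.one_apply, one_mul]
    linarith
  · simpa [reflectedWalk, hn] using le_posPart (reflectedWalk x n - x n)

/-- A step from `0` produces, on average, an extra gain `E[ξ⁺]` compared with a free step. -/
lemma measureReal_reflectedWalk_eq_zero_mul_le (hμ : Integrable id μ) (hmean : ∫ y, y ∂μ = 0)
    (n : ℕ) :
    (iidLaw μ).real {x | reflectedWalk x n = 0} * ∫ y, y⁺ ∂μ ≤
      ∫ x, reflectedWalk x (n + 1) ∂iidLaw μ - ∫ x, reflectedWalk x n ∂iidLaw μ := by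
  have hL1 : MemLp id 1 μ := memLp_one_iff_integrable.2 hμ
  have hW (k : ℕ) : Integrable (fun x ↦ reflectedWalk x k) (iidLaw μ) :=
    (memLp_reflectedWalk hL1 k).integrable le_rfl
  have hX : Integrable (fun x ↦ x n) (iidLaw μ) := (memLp_eval_iidLaw hL1 n).integrable le_rfl
  have hX0 : ∫ x, x n ∂iidLaw μ = 0 := (integral_comp_eval_iidLaw hμ.1 n).trans hmean
  have hzero : MeasurableSet {x : ℕ → ℝ | reflectedWalk x n = 0} :=
    cylinderEvents_le_pi _ (measurable_reflectedWalk n (measurableSet_singleton 0))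
  set Z : (ℕ → ℝ) → ℝ := fun x ↦ ({0} : Set ℝ).indicator 1 (reflectedWalk x n)
  have hZ : Integrable Z (iidLaw μ) := (integrable_const (1 : ℝ)).indicator hzero
  have hindep : IndepFun Z (fun x ↦ (x n)⁺) (iidLaw μ) :=
    (indepFun_reflectedWalk_eval μ n).comp (φ := ({0} : Set ℝ).indicator 1) (ψ := fun y ↦ y⁺)
      (measurable_one.indicator (measurableSet_singleton 0)) (measurable_id.max measurable_const)
  have hgain : ∫ x, Z x * (x n)⁺ ∂iidLaw μ =
      (iidLaw μ).real {x | reflectedWalk x n = 0} * ∫ y, y⁺ ∂μ := by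
    rw [hindep.integral_fun_mul_eq_mul_integral hZ.1 hX.pos_part.1,
      integral_comp_eval_iidLaw (f := fun y ↦ y⁺) hμ.pos_part.1 n]
    exact congrArg (· * _) (integral_indicator_one hzero)
  have hprod : Integrable (fun x ↦ Z x * (x n)⁺) (iidLaw μ) := hindep.integrable_mul hZ hX.pos_part
  have hmono := integral_mono (((hW n).sub hX).add hprod) (hW (n + 1))
    fun x ↦ sub_add_indicator_mul_posPart_le_reflectedWalk x n
  rw [integral_add' ((hW n).sub hX) hprod, integral_sub' (hW n) hX, hX0, hgain] at hmono
  linarith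

lemma integral_ladderCount (μ : Measure ℝ) [IsProbabilityMeasure μ] (n : ℕ) :
    ∫ x, (ladderCount x n : ℝ) ∂iidLaw μ =
      ∑ m ∈ range n, (iidLaw μ).real {x | reflectedWalk x (m + 1) = 0} := by
  have hzero (m : ℕ) : MeasurableSet {x : ℕ → ℝ | reflectedWalk x (m + 1) = 0} :=
    cylinderEvents_le_pi _ (measurable_reflectedWalk (m + 1) (measurableSet_singleton 0))
  have hsum (x : ℕ → ℝ) : (ladderCount x n : ℝ) =
      ∑ m ∈ range n, {x : ℕ → ℝ | reflectedWalk x (m + 1) = 0}.indicator 1 x := by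
    simp [ladderCount, Set.indicator_apply]
  have hint (m : ℕ) : Integrable ({x : ℕ → ℝ | reflectedWalk x (m + 1) = 0}.indicator 1 : _ → ℝ)
      (iidLaw μ) := (integrable_const (1 : ℝ)).indicator (hzero m)
  simp only [hsum]
  rw [integral_finsetSum _ fun m _ ↦ hint m]
  exact sum_congr rfl fun m _ ↦ integral_indicator_one (hzero m)

lemma integral_ladderCount_mul_le (hμ : MemLp id 2 μ) (hmean : ∫ y, y ∂μ = 0) (n : ℕ) :
    (∫ x, (ladderCount x n : ℝ) ∂iidLaw μ) * ∫ y, y⁺ ∂μ ≤ √((n + 1 : ℕ) * ∫ y, y ^ 2 ∂μ) := by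
  have hint : Integrable id μ := hμ.integrable one_le_two
  have hstart : 0 ≤ ∫ x, reflectedWalk x 1 ∂iidLaw μ :=
    integral_nonneg fun x ↦ reflectedWalk_nonneg x 1
  calc (∫ x, (ladderCount x n : ℝ) ∂iidLaw μ) * ∫ y, y⁺ ∂μ
      ≤ ∑ m ∈ range n, (∫ x, reflectedWalk x (m + 1 + 1) ∂iidLaw μ -
          ∫ x, reflectedWalk x (m + 1) ∂iidLaw μ) := by
        rw [integral_ladderCount, sum_mul]
        exact sum_le_sum fun m _ ↦ measureReal_reflectedWalk_eq_zero_mul_le hint hmean (m + 1)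
    _ = ∫ x, reflectedWalk x (n + 1) ∂iidLaw μ - ∫ x, reflectedWalk x 1 ∂iidLaw μ :=
        sum_range_sub (fun m ↦ ∫ x, reflectedWalk x (m + 1) ∂iidLaw μ) n
    _ ≤ ∫ x, reflectedWalk x (n + 1) ∂iidLaw μ := sub_le_self _ hstart
    _ ≤ _ := integral_reflectedWalk_le hμ hmean (n + 1)

lemma integrable_ladderCount (μ : Measure ℝ) [IsProbabilityMeasure μ] (n : ℕ) :
    Integrable (fun x ↦ (ladderCount x n : ℝ)) (iidLaw μ) := by
  refine .of_bound (C := n) ?_ (ae_of_all _ fun x ↦ ?_)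
  · exact (measurable_from_top.comp
      ((measurable_ladderCount n).mono cylinderEvents_le_pi le_rfl)).aestronglyMeasurable
  · rw [Real.norm_natCast, Nat.cast_le]
    exact (card_filter_le _ _).trans_eq (card_range n)

lemma exists_measureReal_le_ladderCount_le (hμ : MemLp id 2 μ) (hmean : ∫ y, y ∂μ = 0)
    (hne : ¬ id =ᵐ[μ] 0) :
    ∃ K : ℝ, ∀ n a : ℕ, 1 ≤ n → 1 ≤ a →
      (iidLaw μ).real {x | a ≤ ladderCount x n} ≤ K * (√n / a) := by
  have hc : 0 < ∫ y, y⁺ ∂μ := integral_posPart_pos (hμ.integrable one_le_two) hmean hne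
  refine ⟨√(2 * ∫ y, y ^ 2 ∂μ) / ∫ y, y⁺ ∂μ, fun n a hn ha ↦ ?_⟩
  have hmarkov : a * (iidLaw μ).real {x | a ≤ ladderCount x n} ≤
      ∫ x, (ladderCount x n : ℝ) ∂iidLaw μ := by
    simpa only [Nat.cast_le] using mul_meas_ge_le_integral_of_nonneg
      (ae_of_all _ fun x ↦ (ladderCount x n).cast_nonneg) (integrable_ladderCount μ n) a
  have hsqrt : √((n + 1 : ℕ) * ∫ y, y ^ 2 ∂μ) ≤ √(2 * ∫ y, y ^ 2 ∂μ) * √n := by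
    rw [← Real.sqrt_mul (by positivity), mul_right_comm]
    gcongr
    exact_mod_cast (by omega : n + 1 ≤ 2 * n)
  have ha_pos : (0 : ℝ) < a := by exact_mod_cast ha
  rw [div_mul_div_comm, le_div_iff₀ (mul_pos hc ha_pos)]
  calc (iidLaw μ).real {x | a ≤ ladderCount x n} * ((∫ y, y⁺ ∂μ) * a)
      = a * (iidLaw μ).real {x | a ≤ ladderCount x n} * ∫ y, y⁺ ∂μ := by ring
    _ ≤ (∫ x, (ladderCount x n : ℝ) ∂iidLaw μ) * ∫ y, y⁺ ∂μ := by gcongr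
    _ ≤ √(2 * ∫ y, y ^ 2 ∂μ) * √n := (integral_ladderCount_mul_le hμ hmean n).trans hsqrt

lemma summable_measureReal_mul_ceil_le_ladderCount (hμ : MemLp id 2 μ) (hmean : ∫ y, y ∂μ = 0)
    (hne : ¬ id =ᵐ[μ] 0) {δ : ℝ} {j : ℕ} (hj : 1 < j * δ) :
    Summable fun n : ℕ ↦
      (iidLaw μ).real {x | j * ⌈(n : ℝ) ^ (1 / 2 + δ)⌉₊ ≤ ladderCount x n} := by
  obtain ⟨K, hK⟩ := exists_measureReal_le_ladderCount_le hμ hmean hne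
  have hsum : Summable fun n : ℕ ↦ |K| ^ j * (n : ℝ) ^ (-(j * δ)) :=
    (Real.summable_nat_rpow.2 (by linarith)).mul_left _
  refine hsum.of_norm_bounded_eventually_nat ?_
  filter_upwards [eventually_ge_atTop 1] with n hn
  set a := ⌈(n : ℝ) ^ (1 / 2 + δ)⌉₊
  have hdecay : √n / a ≤ (n : ℝ) ^ (-δ) := calc
    √n / a ≤ √n / (n : ℝ) ^ (1 / 2 + δ) := by gcongr; exact Nat.le_ceil _
    _ = (n : ℝ) ^ (-δ) := by
      rw [Real.sqrt_eq_rpow, ← Real.rpow_sub (by positivity), sub_add_cancel_left]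
  rw [Real.norm_of_nonneg measureReal_nonneg]
  calc (iidLaw μ).real {x | j * a ≤ ladderCount x n}
      ≤ (iidLaw μ).real {x | a ≤ ladderCount x n} ^ j := measureReal_mul_le_ladderCount_le μ j a n
    _ ≤ (|K| * (n : ℝ) ^ (-δ)) ^ j := by
      gcongr
      exact (hK n a hn (Nat.ceil_pos.2 (by positivity))).trans (by gcongr; exact le_abs_self K)
    _ = |K| ^ j * (n : ℝ) ^ (-(j * δ)) := by
      rw [mul_pow, ← Real.rpow_mul_natCast (by positivity), neg_mul, mul_comm δ]

lemma measureReal_le_heightProcess (μ : Measure ℝ) [IsProbabilityMeasure μ] (a n : ℕ) :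
    (iidLaw μ).real {x | a ≤ heightProcess x n} = (iidLaw μ).real {x | a ≤ ladderCount x n} := by
  have hcount : MeasurableSet {x : ℕ → ℝ | a ≤ ladderCount x n} :=
    cylinderEvents_le_pi _ (measurable_ladderCount n measurableSet_Ici)
  simp only [heightProcess_eq_ladderCount_reverse]
  exact (measurePreserving_reindex_iidLaw μ (reverseBelow_injective n)).measureReal_preimage
    hcount.nullMeasurableSet

lemma ae_eventually_heightProcess_le (hμ : MemLp id 2 μ) (hmean : ∫ y, y ∂μ = 0)
    (hne : ¬ id =ᵐ[μ] 0) {ε : ℝ} (hε : 0 < ε) :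
    ∀ᵐ x ∂iidLaw μ, ∀ᶠ n : ℕ in atTop, (heightProcess x n : ℝ) ≤ (n : ℝ) ^ (1 / 2 + ε) := by
  obtain ⟨j, hj⟩ := exists_nat_gt (1 / (ε / 2))
  rw [div_lt_iff₀ (by positivity)] at hj
  have hofReal (a n : ℕ) : iidLaw μ {x | a ≤ heightProcess x n} =
      ENNReal.ofReal ((iidLaw μ).real {x | a ≤ ladderCount x n}) := by
    rw [← measureReal_le_heightProcess, ofReal_measureReal]
  have hsum : ∑' n : ℕ, iidLaw μ
      {x | j * ⌈(n : ℝ) ^ (1 / 2 + ε / 2)⌉₊ ≤ heightProcess x n} ≠ ∞ := by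
    simp only [hofReal]
    exact (summable_measureReal_mul_ceil_le_ladderCount hμ hmean hne hj).tsum_ofReal_ne_top
  filter_upwards [ae_eventually_notMem hsum] with x hx
  filter_upwards [hx, eventually_natCast_mul_ceil_rpow_le j (by positivity : 0 ≤ 1 / 2 + ε / 2)
    (by linarith : 1 / 2 + ε / 2 < 1 / 2 + ε)] with n hn hpow
  exact le_trans (by exact_mod_cast (not_le.1 hn).le) hpow

lemma ae_eventually_sup_heightProcess_le (hμ : MemLp id 2 μ) (hmean : ∫ y, y ∂μ = 0)
    (hne : ¬ id =ᵐ[μ] 0) :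
    ∀ᵐ x ∂iidLaw μ, ∀ ε : ℝ, 0 < ε → ∀ᶠ n : ℕ in atTop,
      (((range (n + 1)).sup (heightProcess x) : ℕ) : ℝ) ≤ (n : ℝ) ^ (1 / 2 + ε) := by
  have hall : ∀ᵐ x ∂iidLaw μ, ∀ k : ℕ, ∀ᶠ n : ℕ in atTop,
      (heightProcess x n : ℝ) ≤ (n : ℝ) ^ (1 / 2 + 1 / ((k : ℝ) + 1)) :=
    ae_all_iff.2 fun k ↦ ae_eventually_heightProcess_le hμ hmean hne (by positivity)
  filter_upwards [hall] with x hx ε hε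
  obtain ⟨k, hk⟩ := exists_nat_one_div_lt hε
  have hp : 0 < 1 / 2 + ε := by positivity
  refine eventually_sup_range_succ_le
    (fun m n hmn ↦ Real.rpow_le_rpow m.cast_nonneg (Nat.cast_le.2 hmn) hp.le)
    ((tendsto_rpow_atTop hp).comp tendsto_natCast_atTop_atTop) ?_
  filter_upwards [hx k, eventually_ge_atTop 1] with n hn hn1
  exact hn.trans (Real.rpow_le_rpow_of_exponent_le (by exact_mod_cast hn1) (by linarith))

end Probability

theorem height_process_upper_bound_general {Ω : Type*} [MeasurableSpace Ω] {P : Measure Ω}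
    {ξ : ℕ → Ω → ℝ} (hindep : iIndepFun ξ P) (hident : ∀ i, IdentDistrib (ξ i) (ξ 0) P P)
    (hmean : ∫ ω, ξ 0 ω ∂P = 0) (hmom : MemLp (ξ 0) 2 P) (hne : ¬ ξ 0 =ᵐ[P] 0) :
    ∀ᵐ ω ∂P, ∀ ε : ℝ, 0 < ε → ∀ᶠ n : ℕ in atTop,
      (((range (n + 1)).sup (heightProcess fun i ↦ ξ i ω) : ℕ) : ℝ) ≤ (n : ℝ) ^ (1 / 2 + ε) := by
  have := hindep.isProbabilityMeasure
  have hmeas : AEMeasurable (fun ω i ↦ ξ i ω) P :=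
    aemeasurable_pi_iff.2 fun i ↦ (hident i).aemeasurable_fst
  have hlaw : HasLaw (ξ 0) (P.map (ξ 0)) P := ⟨(hident 0).aemeasurable_fst, rfl⟩
  have := hlaw.isProbabilityMeasure_iff.1 ‹_›
  have hseq : HasLaw (fun ω i ↦ ξ i ω) (iidLaw (P.map (ξ 0))) P :=
    hindep.hasLaw_infinitePi (fun i ↦ ⟨(hident i).aemeasurable_fst, (hident i).map_eq⟩) hmeas
  refine ae_of_ae_map hmeas (hseq.map_eq ▸ ae_eventually_sup_heightProcess_le ?_ ?_ ?_)
  · exact (memLp_map_measure_iff aestronglyMeasurable_id hlaw.aemeasurable).2 hmom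
  · exact hlaw.integral_eq.symm.trans hmean
  · exact fun h ↦ hne (ae_of_ae_map hlaw.aemeasurable h)

/-- For a left-continuous random walk `Y` on `ℤ` with centered i.i.d.
increments `ξ_i ≥ −1` having finite second moment and `P(ξ_1 = 0) < 1`, the height process
`H_n = ∑_{k=0}^{n−1} 1{Y_k = min_{k≤j≤n} Y_j}` satisfies, almost surely,
`max_{0≤i≤n} H_i ≤ n^{1/2+o(1)}`. -/
theorem height_process_upper_bound
    {Ω : Type} [MeasurableSpace Ω] (P : Measure Ω) [IsProbabilityMeasure P]
    (ξ : ℕ → Ω → ℤ)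
    (hmeas : ∀ i, Measurable (ξ i))
    (hindep : iIndepFun ξ P)
    (hident : ∀ i, Measure.map (ξ i) P = Measure.map (ξ 0) P)
    (hge : ∀ᵐ ω ∂P, -1 ≤ ξ 0 ω)
    (hmean : ∫ ω, (ξ 0 ω : ℝ) ∂P = 0)
    (hmom : Integrable (fun ω => ((ξ 0 ω : ℝ)) ^ 2) P)
    (hnd : P {ω | ξ 0 ω = 0} < 1)
    (Y : ℕ → Ω → ℤ) (hY : ∀ n ω, Y n ω = ∑ i ∈ Finset.range n, ξ i ω)
    (H : ℕ → Ω → ℕ)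
    (hH : ∀ n ω, H n ω = ∑ k ∈ Finset.range n,
        @ite ℕ (∀ j ∈ Finset.Icc k n, Y k ω ≤ Y j ω) Finset.decidableDforallFinset 1 0) :
    ∀ᵐ ω ∂P, ∀ ε : ℝ, 0 < ε → ∀ᶠ n : ℕ in Filter.atTop,
      (((Finset.range (n + 1)).sup fun i => H i ω : ℕ) : ℝ) ≤
        (n : ℝ) ^ ((1 : ℝ) / 2 + ε) := by
  have hcast : Measurable (Int.cast : ℤ → ℝ) := measurable_from_top
  have hH_eq (n : ℕ) (ω : Ω) : H n ω = heightProcess (fun i ↦ (ξ i ω : ℝ)) n := by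
    simp only [hH, hY, heightProcess, card_filter]
    norm_cast
  simp only [hH_eq]
  refine height_process_upper_bound_general (ξ := fun i ω ↦ (ξ i ω : ℝ))
    (hindep.comp (fun _ ↦ Int.cast) fun _ ↦ hcast)
    (fun i ↦ IdentDistrib.comp ⟨(hmeas i).aemeasurable, (hmeas 0).aemeasurable, hident i⟩ hcast)
    hmean ((memLp_two_iff_integrable_sq (hcast.comp (hmeas 0)).aestronglyMeasurable).2 hmom) ?_
  intro hzero
  have hone : ∀ᵐ ω ∂P, ω ∈ {ω | ξ 0 ω = 0} := hzero.mono fun ω hω ↦ Int.cast_eq_zero.1 hω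
  exact hnd.ne ((prob_compl_eq_zero_iff (hmeas 0 (measurableSet_singleton 0))).1 hone)
end
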